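/- A simple graph with n vertices and at least n^(1+1/r) + 1 edges has girth at most 2r (i.e., contains a cycle of length at most 2r). -/

import Mathlib

namespace SimpleGraph

variable {V : Type*} {G : SimpleGraph V}

/-- Non-backtracking walks with the same endpoints that are short compared to the girth agree. -/
theorem Walk.eq_of_isChain_edges_of_lt_egirth {u v : V} {p q : G.Walk u v}
    (hp : p.edges.IsChain (· ≠ ·)) (hq : q.edges.IsChain (· ≠ ·))
    (h : ((p.length + q.length : ℕ) : ℕ∞) < G.egirth) : p = q := by
  classical
  set K : SimpleGraph V := fromEdgeSet {e | e ∈ p.edges ++ q.edges} with hK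
  have hKG : K ≤ G := by
    intro a b hab
    rw [hK, fromEdgeSet_adj] at hab
    rcases List.mem_append.1 hab.1 with h' | h'
    · exact p.adj_of_mem_edges h'
    · exact q.adj_of_mem_edges h'
  have hacyc : K.IsAcyclic := by
    intro a c hc
    have hsub : c.edges ⊆ p.edges ++ q.edges := by
      intro e he
      have := c.edges_subset_edgeSet he
      rw [hK, edgeSet_fromEdgeSet] at this
      exact this.1
    have hlen : c.length ≤ p.length + q.length := by
      have := (hc.edges_nodup.subperm hsub).length_le
      simpa using this
    have hle : G.egirth ≤ c.length := by
      have := egirth_le_length (hc.mapLe hKG)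
      simpa using this
    exact absurd (hle.trans (by exact_mod_cast hlen)) (not_le.2 h)
  have hpK : ∀ e ∈ p.edges, e ∈ K.edgeSet := fun e he ↦ by
    rw [hK, edgeSet_fromEdgeSet]
    exact ⟨List.mem_append_left _ he, G.not_isDiag_of_mem_edgeSet (p.edges_subset_edgeSet he)⟩
  have hqK : ∀ e ∈ q.edges, e ∈ K.edgeSet := fun e he ↦ by
    rw [hK, edgeSet_fromEdgeSet]
    exact ⟨List.mem_append_right _ he, G.not_isDiag_of_mem_edgeSet (q.edges_subset_edgeSet he)⟩
  have hp' : (p.transfer K hpK).IsPath :=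
    (hacyc.isPath_iff_isChain _).2 (by rwa [edges_transfer])
  have hq' : (q.transfer K hqK).IsPath :=
    (hacyc.isPath_iff_isChain _).2 (by rwa [edges_transfer])
  have heq : p.transfer K hpK = q.transfer K hqK :=
    congrArg Subtype.val ((hacyc.subsingleton_path u v).elim ⟨_, hp'⟩ ⟨_, hq'⟩)
  apply Walk.ext_support
  rw [← p.support_transfer hpK, heq, q.support_transfer]

theorem exists_le_minimal_edge_density [Finite V] {t : ℝ} (ht : 1 ≤ t)
    (h : t * G.support.ncard < G.edgeSet.ncard) :
    ∃ H ≤ G, t * H.support.ncard < H.edgeSet.ncard ∧ ∀ v, (H.neighborSet v).ncard ≠ 1 := by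
  classical
  obtain ⟨H, hH⟩ := (Set.toFinite {H : SimpleGraph V | H ≤ G ∧
    t * H.support.ncard < H.edgeSet.ncard}).exists_minimal ⟨G, le_rfl, h⟩
  refine ⟨H, hH.prop.1, hH.prop.2, fun v hv ↦ ?_⟩
  obtain ⟨w, hw⟩ := Set.ncard_eq_one.1 hv
  have hvw : H.Adj v w := by
    rw [← mem_neighborSet, hw]
    rfl
  have huniq : ∀ x, H.Adj v x → x = w := fun x hx ↦ by
    rw [← mem_neighborSet, hw] at hx
    exact hx
  set H' := H.deleteEdges {s(v, w)} with hH'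
  have hle : H' ≤ H := deleteEdges_le _
  have hedge : H'.edgeSet.ncard + 1 = H.edgeSet.ncard := by
    rw [hH', edgeSet_deleteEdges]
    exact Set.ncard_sdiff_singleton_add_one hvw (Set.toFinite _)
  have hsupp : H'.support.ncard + 1 ≤ H.support.ncard := by
    have hsub : H'.support ⊆ H.support \ {v} := by
      intro x hx
      refine ⟨support_mono hle hx, ?_⟩
      rintro rfl
      obtain ⟨y, hy⟩ := hx
      obtain rfl := huniq y (hle hy)
      simp [hH'] at hy
    have h1 := Set.ncard_le_ncard hsub (Set.toFinite _)
    have h2 := Set.ncard_sdiff_singleton_add_one (s := H.support) (a := v) ⟨w, hvw⟩ (Set.toFinite _)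
    omega
  have hP : t * H'.support.ncard < H'.edgeSet.ncard := by
    have h1 : (H'.edgeSet.ncard : ℝ) + 1 = H.edgeSet.ncard := by exact_mod_cast hedge
    have h2 : (H'.support.ncard : ℝ) + 1 ≤ H.support.ncard := by exact_mod_cast hsupp
    have h3 := hH.prop.2
    nlinarith
  have := hH.le_of_le ⟨hle.trans hH.prop.1, hP⟩ hle hvw
  simp [hH'] at this

open Classical in
/-- The end vertices of the non-backtracking walks starting with the step from `u` to `v`
and making `k` further steps. -/
noncomputable def nonbacktrackingEnds [Fintype V] (G : SimpleGraph V) : ℕ → V → V → Finset V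
  | 0, _, v => {v}
  | k + 1, u, v => ((G.neighborFinset v).erase u).biUnion (G.nonbacktrackingEnds k v)

open Classical in
/-- The number of non-backtracking walks starting with the step from `u` to `v`
and making `k` further steps. -/
noncomputable def nonbacktrackingCount [Fintype V] (G : SimpleGraph V) : ℕ → V → V → ℕ
  | 0, _, _ => 1
  | k + 1, u, v => ∑ w ∈ (G.neighborFinset v).erase u, G.nonbacktrackingCount k v w

section Fintype

variable [Fintype V]

theorem exists_walk_of_mem_nonbacktrackingEnds {k : ℕ} {u v x : V} (huv : G.Adj u v)
    (hx : x ∈ G.nonbacktrackingEnds k u v) :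
    ∃ p : G.Walk v x, p.length = k ∧ (Walk.cons huv p).edges.IsChain (· ≠ ·) := by
  classical
  induction k generalizing u v with
  | zero =>
    obtain rfl : x = v := by simpa [nonbacktrackingEnds] using hx
    exact ⟨.nil, by simp⟩
  | succ k ih =>
    simp only [nonbacktrackingEnds, Finset.mem_biUnion, Finset.mem_erase,
      mem_neighborFinset] at hx
    obtain ⟨w, ⟨hwu, hvw⟩, hx⟩ := hx
    obtain ⟨p, hp, hc⟩ := ih hvw hx
    refine ⟨.cons hvw p, by simp [hp], ?_⟩
    rw [Walk.edges_cons, Walk.edges_cons, List.isChain_cons_cons, ← Walk.edges_cons hvw]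
    refine ⟨?_, hc⟩
    intro he
    rw [Sym2.eq_swap, Sym2.congr_right] at he
    exact hwu he.symm

theorem pairwiseDisjoint_nonbacktrackingEnds {k : ℕ} (v : V)
    (h : ((2 * (k + 1) : ℕ) : ℕ∞) < G.egirth) :
    (G.neighborSet v).PairwiseDisjoint (G.nonbacktrackingEnds k v) := by
  intro w hw w' hw' hne
  rw [mem_neighborSet] at hw hw'
  refine Finset.disjoint_left.2 fun x hx hx' ↦ hne ?_
  obtain ⟨p, hp, hc⟩ := exists_walk_of_mem_nonbacktrackingEnds hw hx
  obtain ⟨p', hp', hc'⟩ := exists_walk_of_mem_nonbacktrackingEnds hw' hx'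
  have := Walk.eq_of_isChain_edges_of_lt_egirth hc hc' (by
    rwa [Walk.length_cons, Walk.length_cons, hp, hp', ← two_mul])
  injection this

theorem card_nonbacktrackingEnds {k : ℕ} (u v : V)
    (h : ((2 * k : ℕ) : ℕ∞) < G.egirth) :
    (G.nonbacktrackingEnds k u v).card = G.nonbacktrackingCount k u v := by
  classical
  induction k generalizing u v with
  | zero => simp [nonbacktrackingEnds, nonbacktrackingCount]
  | succ k ih =>
    rw [nonbacktrackingEnds, nonbacktrackingCount, Finset.card_biUnion]
    · refine Finset.sum_congr rfl fun w _ ↦ ih v w (lt_of_le_of_lt ?_ h)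
      exact_mod_cast (by omega : 2 * k ≤ 2 * (k + 1))
    · intro w hw w' hw' hne
      exact pairwiseDisjoint_nonbacktrackingEnds v h (by simpa using (Finset.mem_erase.1 hw).2)
        (by simpa using (Finset.mem_erase.1 hw').2) hne

open Classical in
theorem sum_nonbacktrackingCount_le_card {k : ℕ} (v : V)
    (h : ((2 * (k + 1) : ℕ) : ℕ∞) < G.egirth) :
    ∑ w ∈ G.neighborFinset v, G.nonbacktrackingCount k v w ≤ Fintype.card V := by
  have hk : ((2 * k : ℕ) : ℕ∞) < G.egirth :=
    lt_of_le_of_lt (by exact_mod_cast (by omega : 2 * k ≤ 2 * (k + 1))) h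
  simp_rw [← card_nonbacktrackingEnds _ _ hk]
  rw [← Finset.card_biUnion]
  · exact Finset.card_le_univ _
  · intro w hw w' hw' hne
    exact pairwiseDisjoint_nonbacktrackingEnds v h (by simpa using hw) (by simpa using hw') hne

open Classical in
theorem sum_sum_neighborFinset_comm (f : V → V → ℝ) :
    ∑ v, ∑ w ∈ G.neighborFinset v, f v w = ∑ v, ∑ w ∈ G.neighborFinset v, f w v :=
  Finset.sum_comm' fun v w ↦ by simp [G.adj_comm]

open Classical in
theorem nonbacktrackingCount_pos (hdeg : ∀ v, G.degree v ≠ 1) (k : ℕ) {u v : V}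
    (huv : G.Adj u v) : 0 < G.nonbacktrackingCount k u v := by
  induction k generalizing u v with
  | zero => simp [nonbacktrackingCount]
  | succ k ih =>
    rw [nonbacktrackingCount]
    refine Finset.sum_pos (fun w hw ↦ ih (by simpa using (Finset.mem_erase.1 hw).2)) ?_
    rw [← Finset.card_pos, Finset.card_erase_of_mem (by simpa using huv.symm),
      card_neighborFinset_eq_degree]
    have h1 := hdeg v
    have h2 : 0 < G.degree v := (G.degree_pos_iff_exists_adj v).2 ⟨u, huv.symm⟩
    omega

end Fintype

end SimpleGraph

/-- Jensen's inequality for the logarithm with uniform weights. -/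
theorem Real.card_inv_mul_sum_log_le {ι : Type*} {s : Finset ι} (hs : s.Nonempty) {f : ι → ℝ}
    (hf : ∀ i ∈ s, 0 < f i) :
    Real.log s.card + (s.card : ℝ)⁻¹ * ∑ i ∈ s, Real.log (f i) ≤ Real.log (∑ i ∈ s, f i) := by
  have hc : (0 : ℝ) < s.card := by exact_mod_cast hs.card_pos
  have hpos : 0 < ∑ i ∈ s, f i := Finset.sum_pos hf hs
  have := strictConcaveOn_log_Ioi.concaveOn.le_map_sum (t := s) (w := fun _ ↦ (s.card : ℝ)⁻¹)
    (p := f) (fun _ _ ↦ by positivity) (by simp [hc.ne']) hf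
  simp only [smul_eq_mul, ← Finset.mul_sum] at this
  rw [Real.log_mul (by positivity) hpos.ne', Real.log_inv] at this
  linarith

namespace SimpleGraph

variable {V : Type*} [Fintype V] {G : SimpleGraph V}

open Classical in
theorem mul_sum_log_le_sum_log_nonbacktrackingCount (hdeg : ∀ v, G.degree v ≠ 1) (k : ℕ) :
    k * ∑ v, G.degree v * Real.log (G.degree v - 1) ≤
      ∑ v, ∑ w ∈ G.neighborFinset v, Real.log (G.nonbacktrackingCount k v w) := by
  induction k with
  | zero => simp [nonbacktrackingCount]
  | succ k ih =>
    have hstep : ∀ u, ∀ v ∈ G.neighborFinset u, Real.log (G.degree v - 1) +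
        ((G.degree v : ℝ) - 1)⁻¹ * ∑ w ∈ (G.neighborFinset v).erase u,
          Real.log (G.nonbacktrackingCount k v w) ≤
        Real.log (G.nonbacktrackingCount (k + 1) u v) := by
      intro u v huv
      rw [mem_neighborFinset] at huv
      have hd : 0 < G.degree v := (G.degree_pos_iff_exists_adj v).2 ⟨u, huv.symm⟩
      have hcard : ((G.neighborFinset v).erase u).card = G.degree v - 1 := by
        rw [Finset.card_erase_of_mem (by simpa using huv.symm), card_neighborFinset_eq_degree]
      have hne : ((G.neighborFinset v).erase u).Nonempty := by
        rw [← Finset.card_pos, hcard]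
        have := hdeg v
        omega
      have := Real.card_inv_mul_sum_log_le hne
        (f := fun w ↦ (G.nonbacktrackingCount k v w : ℝ)) (fun w hw ↦ by
          exact_mod_cast nonbacktrackingCount_pos hdeg k (by simpa using (Finset.mem_erase.1 hw).2))
      rw [hcard, Nat.cast_sub hd, Nat.cast_one] at this
      rw [nonbacktrackingCount, Nat.cast_sum]
      exact this
    have hinner : ∀ v, ∑ u ∈ G.neighborFinset v, (((G.degree v : ℝ) - 1)⁻¹ *
        ∑ w ∈ (G.neighborFinset v).erase u, Real.log (G.nonbacktrackingCount k v w)) =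
        ∑ w ∈ G.neighborFinset v, Real.log (G.nonbacktrackingCount k v w) := by
      intro v
      have hd : (G.degree v : ℝ) - 1 ≠ 0 := by
        rw [sub_ne_zero]
        exact_mod_cast hdeg v
      rw [← Finset.mul_sum, inv_mul_eq_iff_eq_mul₀ hd]
      rw [Finset.sum_congr rfl fun u hu ↦ Finset.sum_erase_eq_sub hu, Finset.sum_sub_distrib,
        Finset.sum_const, card_neighborFinset_eq_degree, nsmul_eq_mul]
      ring
    calc ((k + 1 : ℕ) : ℝ) * ∑ v, G.degree v * Real.log (G.degree v - 1)
        ≤ ∑ v, G.degree v * Real.log (G.degree v - 1) +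
          ∑ v, ∑ w ∈ G.neighborFinset v, Real.log (G.nonbacktrackingCount k v w) := by
          push_cast
          linarith
      _ = ∑ v, ∑ u ∈ G.neighborFinset v, (Real.log (G.degree v - 1) +
          ((G.degree v : ℝ) - 1)⁻¹ * ∑ w ∈ (G.neighborFinset v).erase u,
            Real.log (G.nonbacktrackingCount k v w)) := by
          simp_rw [Finset.sum_add_distrib, hinner]
          simp
      _ = ∑ u, ∑ v ∈ G.neighborFinset u, (Real.log (G.degree v - 1) +
          ((G.degree v : ℝ) - 1)⁻¹ * ∑ w ∈ (G.neighborFinset v).erase u,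
            Real.log (G.nonbacktrackingCount k v w)) := sum_sum_neighborFinset_comm _
      _ ≤ _ := Finset.sum_le_sum fun u _ ↦ Finset.sum_le_sum (hstep u)

open Classical in
theorem degree_mul_log_add_le {t : ℝ} (ht : 1 ≤ t) (hdeg : ∀ v, G.degree v ≠ 1) {v : V}
    (hv : v ∈ G.support) :
    G.degree v * Real.log t + (G.degree v - 2 * t) ≤ G.degree v * Real.log (G.degree v - 1) := by
  have h0 : 0 < G.degree v := (G.degree_pos_iff_exists_adj v).2 hv
  have hd : (2 : ℝ) ≤ G.degree v := by
    have := hdeg v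
    exact_mod_cast (by omega : 2 ≤ G.degree v)
  generalize (G.degree v : ℝ) = d at hd
  have hlog : Real.log t + Real.log (d / (2 * t)) ≤ Real.log (d - 1) := by
    rw [← Real.log_mul (by positivity) (by positivity)]
    apply Real.log_le_log (by positivity)
    rw [show t * (d / (2 * t)) = d / 2 by field_simp]
    linarith
  have hinv := Real.one_sub_inv_le_log_of_pos (x := d / (2 * t)) (by positivity)
  have hmul := mul_le_mul_of_nonneg_left hinv (by positivity : 0 ≤ d)
  have heq : d * (1 - (d / (2 * t))⁻¹) = d - 2 * t := by field_simp
  have := mul_le_mul_of_nonneg_left hlog (by positivity : 0 ≤ d)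
  linarith

open Classical in
theorem sum_degree_mul_log_le {t : ℝ} (ht : 1 ≤ t) (hdeg : ∀ v, G.degree v ≠ 1)
    (h : t * G.support.ncard ≤ G.edgeSet.ncard) :
    2 * G.edgeSet.ncard * Real.log t ≤ ∑ v, G.degree v * Real.log (G.degree v - 1) := by
  have hsum : ∑ v, (G.degree v : ℝ) = 2 * G.edgeSet.ncard := by
    rw [Set.ncard_eq_toFinset_card']
    exact_mod_cast G.sum_degrees_eq_twice_card_edges
  have hle : ∀ v, G.degree v * Real.log t + (G.degree v - if v ∈ G.support then 2 * t else 0) ≤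
      G.degree v * Real.log (G.degree v - 1) := by
    intro v
    split_ifs with hv
    · exact degree_mul_log_add_le ht hdeg hv
    · have : G.degree v = 0 := by
        by_contra h0
        exact hv ((G.degree_pos_iff_exists_adj v).1 (Nat.pos_of_ne_zero h0))
      simp [this]
  have := Finset.sum_le_sum fun v (_ : v ∈ Finset.univ) ↦ hle v
  rw [Finset.sum_add_distrib, Finset.sum_sub_distrib, ← Finset.sum_mul, hsum, ← Finset.sum_filter,
    Finset.sum_const, nsmul_eq_mul] at this
  have hcard : (Finset.univ.filter (· ∈ G.support)).card = G.support.ncard := by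
    rw [← Set.ncard_coe_finset]
    simp
  rw [hcard] at this
  linarith

open Classical in
theorem mul_pow_le_sum_nonbacktrackingCount {t : ℝ} (ht : 1 ≤ t) (hdeg : ∀ v, G.degree v ≠ 1)
    (h : t * G.support.ncard ≤ G.edgeSet.ncard) (k : ℕ) :
    2 * G.edgeSet.ncard * t ^ k ≤
      ∑ v, ∑ w ∈ G.neighborFinset v, (G.nonbacktrackingCount k v w : ℝ) := by
  have htk : 0 < t ^ k := by positivity
  have hsum : ∑ v, (G.degree v : ℝ) = 2 * G.edgeSet.ncard := by
    rw [Set.ncard_eq_toFinset_card']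
    exact_mod_cast G.sum_degrees_eq_twice_card_edges
  have hlog := (mul_le_mul_of_nonneg_left (sum_degree_mul_log_le ht hdeg h) k.cast_nonneg).trans
    (mul_sum_log_le_sum_log_nonbacktrackingCount hdeg k)
  have hle : ∀ v, ∀ w ∈ G.neighborFinset v,
      t ^ k * (1 - k * Real.log t + Real.log (G.nonbacktrackingCount k v w)) ≤
        G.nonbacktrackingCount k v w := by
    intro v w hw
    have hN : (0 : ℝ) < G.nonbacktrackingCount k v w := by
      exact_mod_cast nonbacktrackingCount_pos hdeg k (by simpa using hw)
    have := Real.log_le_sub_one_of_pos (div_pos hN htk)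
    rw [Real.log_div hN.ne' htk.ne', Real.log_pow] at this
    rw [mul_comm, ← le_div_iff₀ htk]
    linarith
  refine le_trans ?_ (Finset.sum_le_sum fun v _ ↦ Finset.sum_le_sum (hle v))
  simp_rw [← Finset.mul_sum, Finset.sum_add_distrib, Finset.sum_const,
    card_neighborFinset_eq_degree, nsmul_eq_mul, ← Finset.sum_mul, hsum]
  rw [mul_comm]
  apply mul_le_mul_of_nonneg_left _ htk.le
  linarith

theorem egirth_le_of_rpow_lt_ncard_edgeSet {r : ℕ} (hr : 1 ≤ r)
    (h : (Fintype.card V : ℝ) ^ (1 + 1 / (r : ℝ)) < G.edgeSet.ncard) :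
    G.egirth ≤ (2 * r : ℕ) := by
  classical
  by_contra! hg
  obtain ⟨k, rfl⟩ : ∃ k, r = k + 1 := ⟨r - 1, by omega⟩
  have hV : 0 < Fintype.card V := by
    rw [Fintype.card_pos_iff]
    by_contra hV
    rw [not_nonempty_iff] at hV
    rw [Set.eq_empty_of_isEmpty G.edgeSet, Set.ncard_empty, Nat.cast_zero] at h
    exact absurd h (not_lt.2 (by positivity))
  have hn : (1 : ℝ) ≤ Fintype.card V := by exact_mod_cast hV
  set t : ℝ := (Fintype.card V : ℝ) ^ (1 / ((k + 1 : ℕ) : ℝ)) with ht_def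
  have ht : 1 ≤ t := Real.one_le_rpow hn (by positivity)
  have htpow : t ^ (k + 1) = Fintype.card V := by
    rw [ht_def, one_div, Real.rpow_inv_natCast_pow (by positivity) (by omega)]
  have hdens : t * G.support.ncard < G.edgeSet.ncard := by
    rw [Real.rpow_add (by linarith), Real.rpow_one, mul_comm] at h
    refine lt_of_le_of_lt (mul_le_mul_of_nonneg_left ?_ (by positivity)) h
    rw [← Nat.card_eq_fintype_card]
    exact_mod_cast Set.ncard_le_card _
  obtain ⟨H, hHG, hH, hdeg⟩ := exists_le_minimal_edge_density ht hdens
  have hdeg' : ∀ v, H.degree v ≠ 1 := fun v ↦ by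
    rw [← card_neighborSet_eq_degree, ← Nat.card_eq_fintype_card]
    exact hdeg v
  have hlow := mul_pow_le_sum_nonbacktrackingCount ht hdeg' hH.le k
  have hg' := lt_of_lt_of_le hg (egirth_anti hHG)
  have hup : ∀ v, ∑ w ∈ H.neighborFinset v, (H.nonbacktrackingCount k v w : ℝ) ≤
      if v ∈ H.support then (Fintype.card V : ℝ) else 0 := by
    intro v
    split_ifs with hv
    · exact_mod_cast sum_nonbacktrackingCount_le_card v hg'
    · refine (Finset.sum_eq_zero fun w hw ↦ absurd ⟨w, ?_⟩ hv).le
      simpa using hw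
  have hup' := Finset.sum_le_sum fun v (_ : v ∈ Finset.univ) ↦ hup v
  have hcard : (Finset.univ.filter (· ∈ H.support)).card = H.support.ncard := by
    rw [← Set.ncard_coe_finset]
    simp
  rw [← Finset.sum_filter, Finset.sum_const, nsmul_eq_mul, hcard, ← htpow, pow_succ] at hup'
  have htk : 0 < t ^ k := by positivity
  have := mul_lt_mul_of_pos_right hH htk
  have : 0 ≤ t * H.support.ncard * t ^ k := by positivity
  linarith

end SimpleGraph

/-- A simple graph with `n` vertices and at least `n^(1+1/r) + 1` edges
has girth at most `2r`. -/
theorem girth_le_of_many_edges {V : Type*} [Fintype V] (G : SimpleGraph V)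
    (n r : ℕ) (hn : Fintype.card V = n) (hr : 1 ≤ r)
    (h : (n : ℝ) ^ (1 + 1 / (r : ℝ)) + 1 ≤ (G.edgeSet.ncard : ℝ)) :
    G.girth ≤ (2 * r : ℕ) := by
  subst hn
  exact ENat.toNat_le_of_le_natCast
    (SimpleGraph.egirth_le_of_rpow_lt_ncard_edgeSet hr (by linarith))
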